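/- arXiv:2601.22994 — 2 statements merged into one kernel-verified Lean document; each statement's English description precedes it below -/
import Mathlib

section
/- Let w, τ' ∈ S_n with ℓ(τ') ≤ ℓ(w). Then the polynomial obtained from ∂_{τ'}𝔖_w(x;y) (the Demazure operator ∂_{τ'} acting in the x-variables) by substituting y_i := x_i for all 1 ≤ i ≤ n equals 1 if τ' = w, and equals 0 otherwise. -/
open MvPolynomial

noncomputable section

/-- `R n` is the polynomial ring `ℂ[x_1, …, x_n]`. -/
abbrev R (n : ℕ) := MvPolynomial (Fin n) ℂ

/-- The inversion set of a permutation. -/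
def invSet (n : ℕ) (w : Equiv.Perm (Fin n)) : Finset (Fin n × Fin n) :=
  Finset.univ.filter fun p => p.1 < p.2 ∧ w p.2 < w p.1

/-- The Coxeter length of a permutation, i.e. its number of inversions. -/
def len (n : ℕ) (w : Equiv.Perm (Fin n)) : ℕ := (invSet n w).card

/-- `Δ_w = ∏_{(i,j) ∈ inv(w)} (x_i - x_j)`. -/
def Δpoly (n : ℕ) (w : Equiv.Perm (Fin n)) : R n :=
  ∏ p ∈ invSet n w, (X p.1 - X p.2)

/-- The simple reflection `s_j = (j, j+1)` (1-based `j` corresponds to 0-based index here);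
for out-of-range indices we use the identity. -/
def simpleRefl (n : ℕ) (j : ℕ) : Equiv.Perm (Fin n) :=
  if hj : j + 1 < n then Equiv.swap ⟨j, Nat.lt_of_succ_lt hj⟩ ⟨j + 1, hj⟩ else 1

open Classical in
/-- The Demazure operator `∂_j = (id - s_j)/(x_j - x_{j+1})` on `R n`. -/
def demX (n : ℕ) (j : ℕ) (h : R n) : R n :=
  if hj : j + 1 < n then
    let a : Fin n := ⟨j, Nat.lt_of_succ_lt hj⟩
    let b : Fin n := ⟨j + 1, hj⟩
    if hd : (X a - X b : R n) ∣ (h - rename (Equiv.swap a b) h) then hd.choose else 0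
  else 0

/-- Composite Demazure operator along a word `[a_1, …, a_k]`:
`∂_{a_1} ∘ ⋯ ∘ ∂_{a_k}`. -/
def demWord (n : ℕ) (l : List ℕ) (h : R n) : R n := l.foldr (demX n) h

/-- `l` is a reduced word for `w`: `w = s_{a_1} ⋯ s_{a_k}` with `k = ℓ(w)`. -/
def IsReducedWord (n : ℕ) (w : Equiv.Perm (Fin n)) (l : List ℕ) : Prop :=
  (l.map (simpleRefl n)).prod = w ∧ l.length = len n w

open Classical in
/-- The Demazure operator `∂_w` of a permutation, computed from a (choice of) reduced word;
it is independent of this choice. -/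
def dem (n : ℕ) (w : Equiv.Perm (Fin n)) : R n → R n :=
  if h : ∃ l, IsReducedWord n w l then demWord n h.choose else id

/-- The longest element `w_0` of `S_n`. -/
def w₀ (n : ℕ) : Equiv.Perm (Fin n) := Fin.revPerm

/-- The staircase monomial `x_1^{n-1} x_2^{n-2} ⋯ x_{n-1}`. -/
def staircase (n : ℕ) : R n := ∏ i : Fin n, X i ^ (n - 1 - (i : ℕ))


/-- `R2 n` is the polynomial ring `ℂ[x_1, …, x_n, y_1, …, y_n]`, with the `x`-variables
indexed by `Sum.inl` and the `y`-variables indexed by `Sum.inr`. -/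
abbrev R2 (n : ℕ) := MvPolynomial (Fin n ⊕ Fin n) ℂ

open Classical in
/-- The Demazure operator `∂_j` acting on the `x`-variables of `ℂ[x, y]`. -/
def demX2 (n : ℕ) (j : ℕ) (h : R2 n) : R2 n :=
  if hj : j + 1 < n then
    let a : Fin n := ⟨j, Nat.lt_of_succ_lt hj⟩
    let b : Fin n := ⟨j + 1, hj⟩
    if hd : (X (Sum.inl a) - X (Sum.inl b) : R2 n) ∣
        (h - rename (Equiv.sumCongr (Equiv.swap a b) (Equiv.refl (Fin n))) h) then
      hd.choose
    else 0
  else 0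

/-- Composite Demazure operator (in the `x`-variables) along a word. -/
def demWord2 (n : ℕ) (l : List ℕ) (h : R2 n) : R2 n := l.foldr (demX2 n) h

open Classical in
/-- The Demazure operator `∂_w` acting on the `x`-variables of `ℂ[x, y]`, computed from a
(choice of) reduced word for `w`; it is independent of this choice. -/
def dem2 (n : ℕ) (w : Equiv.Perm (Fin n)) : R2 n → R2 n :=
  if h : ∃ l, IsReducedWord n w l then demWord2 n h.choose else id

open Classical in
/-- `Δ(x; y) = ∏_{i + j ≤ n} (x_i - y_j)` (with `1`-based indices `i, j`). -/
def Δxy (n : ℕ) : R2 n :=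
  ∏ p ∈ Finset.univ.filter (fun p : Fin n × Fin n => (p.1 : ℕ) + (p.2 : ℕ) + 2 ≤ n),
    (X (Sum.inl p.1) - X (Sum.inr p.2))

/-- The double Schubert polynomial `𝔖_w(x; y) = ∂_{w⁻¹ w₀} Δ(x; y)`, with the Demazure
operators acting on the `x`-variables only. -/
def doubleSchubert (n : ℕ) (w : Equiv.Perm (Fin n)) : R2 n := dem2 n (w⁻¹ * w₀ n) (Δxy n)

theorem mem_invSet (n : ℕ) (w : Equiv.Perm (Fin n)) (p : Fin n × Fin n) :
    p ∈ invSet n w ↔ p.1 < p.2 ∧ w p.2 < w p.1 := by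
  simp [invSet]

theorem swap_lt_iff (n : ℕ) (a b : Fin n) (hab : (b : ℕ) = a + 1) (i j : Fin n)
    (h : ¬ (i = a ∧ j = b)) (h' : ¬ (i = b ∧ j = a)) :
    Equiv.swap a b i < Equiv.swap a b j ↔ i < j := by
  simp only [Equiv.swap_apply_def]
  split_ifs <;> simp only [Fin.lt_def, Fin.ext_iff] at * <;> omega

theorem invSet_mul_swap (n : ℕ) (v : Equiv.Perm (Fin n)) (a b : Fin n)
    (hab : (b : ℕ) = a + 1) (hv : v a < v b) :
    invSet n (v * Equiv.swap a b) = insert (a, b)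
      ((invSet n v).map
        (Equiv.prodCongr (Equiv.swap a b) (Equiv.swap a b)).toEmbedding) := by
  have hlt : a < b := by rw [Fin.lt_def]; omega
  ext ⟨i, j⟩
  rw [Finset.mem_insert, Finset.mem_map_equiv, mem_invSet, mem_invSet]
  simp only [Equiv.Perm.mul_apply, Prod.mk.injEq, Equiv.prodCongr_symm, Equiv.symm_swap,
    Equiv.prodCongr_apply, Prod.map]
  by_cases h : i = a ∧ j = b
  · obtain ⟨rfl, rfl⟩ := h
    simp [hlt, hv]
  · by_cases h' : i = b ∧ j = a
    · obtain ⟨rfl, rfl⟩ := h'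
      simp [hv.le, hlt.ne']
    · rw [swap_lt_iff n a b hab i j h h']
      simp [h]

theorem not_mem_map (n : ℕ) (v : Equiv.Perm (Fin n)) (a b : Fin n)
    (hab : (b : ℕ) = a + 1) :
    (a, b) ∉ (invSet n v).map
        (Equiv.prodCongr (Equiv.swap a b) (Equiv.swap a b)).toEmbedding := by
  have hlt : a < b := by rw [Fin.lt_def]; omega
  rw [Finset.mem_map_equiv, mem_invSet]
  simp [hlt.le]

theorem len_mul_swap (n : ℕ) (v : Equiv.Perm (Fin n)) (a b : Fin n)
    (hab : (b : ℕ) = a + 1) (hv : v a < v b) :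
    len n (v * Equiv.swap a b) = len n v + 1 := by
  rw [len, invSet_mul_swap n v a b hab hv, Finset.card_insert_of_notMem (not_mem_map n v a b hab),
    Finset.card_map, len]

theorem len_mul_swap' (n : ℕ) (v : Equiv.Perm (Fin n)) (a b : Fin n)
    (hab : (b : ℕ) = a + 1) (hv : v b < v a) :
    len n (v * Equiv.swap a b) + 1 = len n v := by
  have h := len_mul_swap n (v * Equiv.swap a b) a b hab (by simpa using hv)
  rw [mul_assoc, Equiv.swap_mul_self, mul_one] at h
  exact h.symm

/-- `∏_{(i,j) ∈ inv v} (x_{v i} - x_{v j})`. -/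
def invProd (n : ℕ) (v : Equiv.Perm (Fin n)) : R n :=
  ∏ p ∈ invSet n v, (X (v p.1) - X (v p.2))

theorem invProd_mul_swap (n : ℕ) (v : Equiv.Perm (Fin n)) (a b : Fin n)
    (hab : (b : ℕ) = a + 1) (hv : v a < v b) :
    invProd n (v * Equiv.swap a b) = (X (v b) - X (v a)) * invProd n v := by
  rw [invProd, invSet_mul_swap n v a b hab hv, Finset.prod_insert (not_mem_map n v a b hab),
    Finset.prod_map, invProd]
  simp

theorem len_mul_simpleRefl_le (n : ℕ) (v : Equiv.Perm (Fin n)) (j : ℕ) :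
    len n (v * simpleRefl n j) ≤ len n v + 1 := by
  unfold simpleRefl
  split_ifs with hj
  · rcases lt_trichotomy (v ⟨j, Nat.lt_of_succ_lt hj⟩) (v ⟨j + 1, hj⟩) with h | h | h
    · exact (len_mul_swap n v _ _ rfl h).le
    · have := v.injective h
      simp at this
    · have := len_mul_swap' n v _ _ rfl h
      omega
  · simp

theorem len_le_of_word (n : ℕ) (l : List ℕ) (v : Equiv.Perm (Fin n)) :
    len n (v * (l.map (simpleRefl n)).prod) ≤ l.length + len n v := by
  induction l generalizing v with
  | nil => simp
  | cons j l ih =>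
    have h1 := ih (v * simpleRefl n j)
    have h2 := len_mul_simpleRefl_le n v j
    simp only [List.map_cons, List.prod_cons, List.length_cons, ← mul_assoc]
    omega

theorem exists_descent (n : ℕ) (w : Equiv.Perm (Fin n)) (hw : w ≠ 1) :
    ∃ j, ∃ hj : j + 1 < n, w ⟨j + 1, hj⟩ < w ⟨j, Nat.lt_of_succ_lt hj⟩ := by
  by_contra! hcon
  apply hw
  cases n with
  | zero => exact Subsingleton.elim _ _
  | succ n =>
    have hm : StrictMono w := by
      rw [Fin.strictMono_iff_lt_succ]
      intro i
      refine lt_of_le_of_ne (hcon i (by omega)) ?_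
      intro h
      have := w.injective h
      simp [Fin.ext_iff] at this
    have hid : (StrictMono.orderIsoOfSurjective w hm w.surjective) = OrderIso.refl _ :=
      Subsingleton.elim _ _
    ext i
    have := congrArg (fun e => e i) hid
    simpa using congrArg Fin.val this

theorem exists_reduced (n : ℕ) (w : Equiv.Perm (Fin n)) : ∃ l, IsReducedWord n w l := by
  induction hk : len n w generalizing w with
  | zero =>
    by_cases hw : w = 1
    · exact ⟨[], by simp [hw], by simp [hk]⟩
    · obtain ⟨j, hj, h⟩ := exists_descent n w hw
      have := len_mul_swap' n w _ _ rfl h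
      omega
  | succ k ih =>
    by_cases hw : w = 1
    · subst hw
      exfalso
      have : invSet n 1 = ∅ := by
        ext p
        rw [mem_invSet]
        simpa using fun h => le_of_lt h
      simp [len, this] at hk
    · obtain ⟨j, hj, h⟩ := exists_descent n w hw
      have h1 := len_mul_swap' n w _ _ rfl h
      obtain ⟨l, hl1, hl2⟩ := ih (w * Equiv.swap ⟨j, Nat.lt_of_succ_lt hj⟩ ⟨j + 1, hj⟩) (by omega)
      refine ⟨l ++ [j], ?_, ?_⟩
      · simp [hl1, simpleRefl, hj, mul_assoc]
      · simp only [List.length_append, hl2, List.length_singleton]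
        exact h1

theorem dem2_eq (n : ℕ) (w : Equiv.Perm (Fin n)) :
    ∃ l, IsReducedWord n w l ∧ dem2 n w = demWord2 n l := by
  have h := exists_reduced n w
  refine ⟨h.choose, h.choose_spec, ?_⟩
  rw [dem2, dif_pos h]

theorem invSet_w0 (n : ℕ) : invSet n (w₀ n) = Finset.univ.filter fun p => p.1 < p.2 := by
  ext p
  simp [invSet, w₀]

theorem len_mul_w0 (n : ℕ) (u : Equiv.Perm (Fin n)) :
    len n (u * w₀ n) + len n u = len n (w₀ n) := by
  have h1 : len n (u * w₀ n) =
      ((Finset.univ.filter fun p : Fin n × Fin n => p.1 < p.2).filter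
        fun p => ¬ u p.2 < u p.1).card := by
    rw [len]
    refine Finset.card_bij (fun p _ => (Fin.rev p.2, Fin.rev p.1)) ?_ ?_ ?_
    · rintro ⟨i, j⟩ h
      rw [mem_invSet] at h
      simp only [w₀, Equiv.Perm.mul_apply, Fin.revPerm_apply] at h
      simp [h.1, h.2.le]
    · rintro ⟨i, j⟩ _ ⟨i', j'⟩ _ h
      simp at h
      simp [h.1, h.2]
    · rintro ⟨i, j⟩ h
      simp at h
      refine ⟨(Fin.rev j, Fin.rev i), ?_, by simp⟩
      rw [mem_invSet]
      simp only [w₀, Equiv.Perm.mul_apply, Fin.revPerm_apply, Fin.rev_rev]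
      refine ⟨by simpa using h.1, lt_of_le_of_ne h.2 fun h2 => h.1.ne (u.injective h2)⟩
  have h2 : len n u =
      ((Finset.univ.filter fun p : Fin n × Fin n => p.1 < p.2).filter
        fun p => u p.2 < u p.1).card := by
    rw [len, Finset.filter_filter, invSet]
  rw [h1, h2, len, invSet_w0, add_comm]
  exact Finset.card_filter_add_card_filter_not _

theorem len_inv (n : ℕ) (u : Equiv.Perm (Fin n)) : len n u⁻¹ = len n u := by
  rw [len, len]
  refine Finset.card_bij (fun p _ => (u⁻¹ p.2, u⁻¹ p.1)) ?_ ?_ ?_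
  · rintro ⟨i, j⟩ h
    rw [mem_invSet] at h ⊢
    simpa using h.symm
  · rintro ⟨i, j⟩ _ ⟨i', j'⟩ _ h
    simp at h
    simp [h.1, h.2]
  · rintro ⟨i, j⟩ h
    rw [mem_invSet] at h
    refine ⟨(u j, u i), ?_, by simp⟩
    rw [mem_invSet]
    simpa using h.symm

/-- Evaluation `x_i ↦ x_{v i}`, `y_i ↦ x_i`. -/
def ev (n : ℕ) (v : Equiv.Perm (Fin n)) : R2 n →ₐ[ℂ] R n :=
  aeval (Sum.elim (fun i => X (v i)) X)

theorem dvd_sub_swap (n : ℕ) (a b : Fin n) (h : R2 n) :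
    (X (Sum.inl a) - X (Sum.inl b) : R2 n) ∣
        (h - rename (Equiv.sumCongr (Equiv.swap a b) (Equiv.refl (Fin n))) h) := by
  rw [← Ideal.mem_span_singleton, ← Ideal.Quotient.eq]
  set I : Ideal (R2 n) := Ideal.span {X (Sum.inl a) - X (Sum.inl b)} with hI
  have hx : Ideal.Quotient.mk I (X (Sum.inl a)) = Ideal.Quotient.mk I (X (Sum.inl b)) := by
    rw [Ideal.Quotient.eq]
    exact Ideal.mem_span_singleton_self _
  have : (Ideal.Quotient.mkₐ ℂ I) = (Ideal.Quotient.mkₐ ℂ I).comp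
      (rename (Equiv.sumCongr (Equiv.swap a b) (Equiv.refl (Fin n)))) := by
    apply MvPolynomial.algHom_ext
    rintro (i | i)
    · simp only [AlgHom.comp_apply, rename_X, Equiv.sumCongr_apply, Sum.map_inl,
        Ideal.Quotient.mkₐ_eq_mk, Equiv.swap_apply_def]
      split_ifs with h1 h2
      · rw [h1, hx]
      · rw [h2, hx]
      · rfl
    · simp only [AlgHom.comp_apply, rename_X, Equiv.sumCongr_apply, Sum.map_inr,
        Equiv.refl_apply]
  exact congrArg (fun f => f h) this

theorem demX2_spec (n : ℕ) (j : ℕ) (hj : j + 1 < n) (h : R2 n) :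
    (X (Sum.inl ⟨j, Nat.lt_of_succ_lt hj⟩) - X (Sum.inl ⟨j + 1, hj⟩)) * demX2 n j h =
      h - rename (Equiv.sumCongr (Equiv.swap (⟨j, Nat.lt_of_succ_lt hj⟩ : Fin n) ⟨j + 1, hj⟩)
        (Equiv.refl (Fin n))) h := by
  have hd := dvd_sub_swap n ⟨j, Nat.lt_of_succ_lt hj⟩ ⟨j + 1, hj⟩ h
  rw [demX2, dif_pos hj]
  simp only
  rw [dif_pos hd]
  exact hd.choose_spec.symm

theorem ev_rename (n : ℕ) (v s : Equiv.Perm (Fin n)) (h : R2 n) :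
    ev n v (rename (Equiv.sumCongr s (Equiv.refl (Fin n))) h) = ev n (v * s) h := by
  rw [ev, ev, aeval_rename]
  congr 2
  ext1 i
  cases i <;> simp

theorem ev_demX2 (n : ℕ) (j : ℕ) (hj : j + 1 < n) (v : Equiv.Perm (Fin n)) (h : R2 n) :
    (X (v ⟨j, Nat.lt_of_succ_lt hj⟩) - X (v ⟨j + 1, hj⟩)) * ev n v (demX2 n j h) =
      ev n v h - ev n (v * Equiv.swap ⟨j, Nat.lt_of_succ_lt hj⟩ ⟨j + 1, hj⟩) h := by
  rw [← ev_rename, ← map_sub, ← demX2_spec n j hj, map_mul, map_sub]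
  simp [ev]

theorem ev_Δ_w0 (n : ℕ) : ev n (w₀ n) (Δxy n) = invProd n (w₀ n) := by
  rw [Δxy, map_prod, invProd]
  refine Finset.prod_bij (fun p _ => (p.1, Fin.rev p.2)) ?_ ?_ ?_ ?_
  · rintro ⟨i, j⟩ h
    simp at h
    rw [invSet_w0]
    rw [Finset.mem_filter, Fin.lt_def, Fin.val_rev]
    refine ⟨Finset.mem_univ _, ?_⟩
    simp only
    omega
  · rintro ⟨i, j⟩ _ ⟨i', j'⟩ _ h
    simpa using h
  · rintro ⟨i, j⟩ h
    rw [invSet_w0] at h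
    rw [Finset.mem_filter, Fin.lt_def] at h
    have h' := h.2
    simp only at h'
    refine ⟨(i, Fin.rev j), ?_, by simp⟩
    simp [Fin.val_rev]
    omega
  · rintro ⟨i, j⟩ _
    simp [ev, w₀]

theorem ev_Δ_ne (n : ℕ) (v : Equiv.Perm (Fin n)) (hv : v ≠ w₀ n) : ev n v (Δxy n) = 0 := by
  have : ∃ i : Fin n, (i : ℕ) + (v i : ℕ) + 2 ≤ n := by
    by_contra! hcon
    apply hv
    have hle : ∀ i ∈ Finset.univ, ((w₀ n i : Fin n) : ℕ) ≤ (v i : ℕ) := by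
      intro i _
      have := hcon i
      simp [w₀, Fin.val_rev]
      omega
    have hsum : ∑ i, ((w₀ n i : Fin n) : ℕ) = ∑ i, (v i : ℕ) := by
      rw [Equiv.sum_comp (w₀ n) (fun i : Fin n => (i : ℕ)),
        Equiv.sum_comp v (fun i : Fin n => (i : ℕ))]
    have := (Finset.sum_eq_sum_iff_of_le hle).1 hsum
    ext i
    exact (this i (Finset.mem_univ i)).symm
  obtain ⟨i, hi⟩ := this
  rw [Δxy, map_prod]
  refine Finset.prod_eq_zero (i := (i, v i)) (by simpa using hi) ?_
  simp [ev]

open Classical in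
theorem ev_demWord2 (n : ℕ) (l : List ℕ) (v : Equiv.Perm (Fin n))
    (hl : l.length + len n v ≤ len n (w₀ n)) :
    ev n v (demWord2 n l (Δxy n)) =
      if v * (l.map (simpleRefl n)).prod = w₀ n then invProd n v else 0 := by
  induction l generalizing v with
  | nil =>
    simp only [demWord2, List.foldr_nil, List.map_nil, List.prod_nil, mul_one]
    split_ifs with h
    · rw [h, ev_Δ_w0]
    · exact ev_Δ_ne n v h
  | cons j l ih =>
    have hshort : ∀ u : Equiv.Perm (Fin n), l.length + len n u < len n (w₀ n) →
        u * (l.map (simpleRefl n)).prod ≠ w₀ n := by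
      intro u hu h
      have := len_le_of_word n l u
      rw [h] at this
      omega
    simp only [List.length_cons] at hl
    have hv0 : ev n v (demWord2 n l (Δxy n)) = 0 := by
      rw [ih v (by omega), if_neg (hshort v (by omega))]
    have hcons : demWord2 n (j :: l) (Δxy n) = demX2 n j (demWord2 n l (Δxy n)) := rfl
    rw [hcons, List.map_cons, List.prod_cons, ← mul_assoc]
    by_cases hj : j + 1 < n
    · have key := ev_demX2 n j hj v (demWord2 n l (Δxy n))
      have hs : simpleRefl n j = Equiv.swap ⟨j, Nat.lt_of_succ_lt hj⟩ ⟨j + 1, hj⟩ := by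
        rw [simpleRefl, dif_pos hj]
      rw [hs]
      set a : Fin n := ⟨j, Nat.lt_of_succ_lt hj⟩ with ha
      set b : Fin n := ⟨j + 1, hj⟩ with hb
      have hab : (b : ℕ) = a + 1 := rfl
      have hne : v a ≠ v b := fun h => by
        have := v.injective h
        simp [ha, hb] at this
      have hX : (X (v a) - X (v b) : R n) ≠ 0 := by
        rw [sub_ne_zero]
        exact fun h => hne (X_injective h)
      apply mul_left_cancel₀ hX
      rw [key, hv0, zero_sub]
      rcases lt_or_gt_of_ne hne with h | h
      · have hlen := len_mul_swap n v a b hab h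
        rw [ih _ (by omega), invProd_mul_swap n v a b hab h]
        split_ifs
        · ring
        · simp
      · have hlen := len_mul_swap' n v a b hab h
        have hn := hshort (v * Equiv.swap a b) (by omega)
        rw [ih _ (by omega), if_neg hn, if_neg hn]
        simp
    · have h0 : demX2 n j (demWord2 n l (Δxy n)) = 0 := by rw [demX2, dif_neg hj]
      have hs : simpleRefl n j = 1 := by rw [simpleRefl, dif_neg hj]
      rw [h0, hs, mul_one, if_neg (hshort v (by omega)), map_zero]

/-- For `τ', w ∈ S_n` with `ℓ(τ') ≤ ℓ(w)`, the polynomial obtained from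
`∂_{τ'} 𝔖_w(x; y)` (Demazure operator in the `x`-variables) by substituting `y_i := x_i`
equals `1` if `τ' = w` and `0` otherwise. -/
theorem statement1 (n : ℕ) (w τ' : Equiv.Perm (Fin n)) (hl : len n τ' ≤ len n w) :
    aeval (Sum.elim X X) (dem2 n τ' (doubleSchubert n w)) =
      (if τ' = w then 1 else 0 : R n) := by
  obtain ⟨l1, ⟨h1, h1'⟩, e1⟩ := dem2_eq n τ'
  obtain ⟨l2, ⟨h2, h2'⟩, e2⟩ := dem2_eq n (w⁻¹ * w₀ n)
  have e : dem2 n τ' (doubleSchubert n w) = demWord2 n (l1 ++ l2) (Δxy n) := by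
    rw [doubleSchubert, e1, e2, demWord2, demWord2, demWord2, List.foldr_append]
  have hone : len n 1 = 0 := by
    have := len_mul_w0 n 1
    rw [one_mul] at this
    omega
  have hprod : invProd n 1 = 1 := by
    rw [invProd, Finset.card_eq_zero.1 hone, Finset.prod_empty]
  have hlen := len_mul_w0 n w⁻¹
  rw [len_inv] at hlen
  have main := ev_demWord2 n (l1 ++ l2) 1 (by rw [List.length_append]; omega)
  rw [e]
  have hev : ev n 1 = aeval (Sum.elim X X) := rfl
  rw [← hev, main, hprod, one_mul, List.map_append, List.prod_append, h1, h2, ← mul_assoc]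
  simp only [mul_eq_right, mul_inv_eq_one]
end
end

section
/- For every integer 0 ≤ j ≤ n(n−1)/2 + 1, the left R-module homomorphism ⊕_{w : ℓ(w) < j} F_w : R ⊗_{R^{S_n}} R → ⊕_{w : ℓ(w) < j} R is injective on Γ_{<j}, the left R-submodule of R ⊗_{R^{S_n}} R spanned by {S_w : ℓ(w) < j}. -/
open MvPolynomial

noncomputable section

/-- The Schubert polynomial `𝔖_w(x) = ∂_{w⁻¹ w₀}(x_1^{n-1} ⋯ x_{n-1})`. -/
def schubert (n : ℕ) (w : Equiv.Perm (Fin n)) : R n := dem n (w⁻¹ * w₀ n) (staircase n)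



open TensorProduct

/-- The subalgebra `R^{S_n} ⊆ R` of symmetric polynomials. -/
abbrev Ssub (n : ℕ) := MvPolynomial.symmetricSubalgebra (Fin n) ℂ

/-- The tensor product `R ⊗_{R^{S_n}} R`. -/
abbrev T (n : ℕ) := TensorProduct (Ssub n) (R n) (R n)

/-- `rename w` as an `R^{S_n}`-algebra endomorphism of `R`. -/
def renameS (n : ℕ) (w : Equiv.Perm (Fin n)) : R n →ₐ[Ssub n] R n :=
  { (rename ⇑w : R n →ₐ[ℂ] R n) with
    commutes' := fun s => s.2 w }

/-- `F_w : R ⊗_{R^{S_n}} R → R_w`, the `R`-bimodule homomorphism `f ⊗ g ↦ f · (w·g)`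
(the target `R_w` has underlying abelian group `R`). -/
def Fw (n : ℕ) (w : Equiv.Perm (Fin n)) : T n →ₐ[Ssub n] R n :=
  Algebra.TensorProduct.productMap (AlgHom.id (Ssub n) (R n)) (renameS n w)

open Classical in
/-- `S_w = 1 ⊗ 𝔖_w(x) + Σ 𝔖_v(-x) ⊗ 𝔖_u(x)`, the sum over all factorizations `w = v⁻¹ u`
with `ℓ(u) < ℓ(w)` and `ℓ(w) = ℓ(v) + ℓ(u)`. -/
def Sw (n : ℕ) (w : Equiv.Perm (Fin n)) : T n :=
  (1 : R n) ⊗ₜ[Ssub n] schubert n w +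
  ∑ p ∈ Finset.univ.filter
      (fun p : Equiv.Perm (Fin n) × Equiv.Perm (Fin n) =>
        w = p.2⁻¹ * p.1 ∧ len n p.1 < len n w ∧ len n w = len n p.2 + len n p.1),
    (aeval (fun i => -(X i : R n)) (schubert n p.2)) ⊗ₜ[Ssub n] schubert n p.1



namespace S5
open Equiv

variable {n : ℕ}

/-- left index -/
def ia (i : ℕ) (hi : i + 1 < n) : Fin n := ⟨i, Nat.lt_of_succ_lt hi⟩
/-- right index -/
def ib (i : ℕ) (hi : i + 1 < n) : Fin n := ⟨i + 1, hi⟩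

lemma ia_lt_ib (i : ℕ) (hi : i + 1 < n) : ia i hi < ib i hi := by
  simp [ia, ib, Fin.lt_def]

lemma sr_eq (i : ℕ) (hi : i + 1 < n) : simpleRefl n i = swap (ia i hi) (ib i hi) := by
  simp [simpleRefl, hi, ia, ib]

lemma sr_out (i : ℕ) (hi : ¬ i + 1 < n) : simpleRefl n i = 1 := by
  simp [simpleRefl, hi]

lemma sr_sq (i : ℕ) : simpleRefl n i * simpleRefl n i = 1 := by
  by_cases hi : i + 1 < n
  · rw [sr_eq i hi]; simp
  · rw [sr_out i hi]; simp

lemma sr_inv (i : ℕ) : (simpleRefl n i)⁻¹ = simpleRefl n i :=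
  inv_eq_of_mul_eq_one_left (sr_sq i)

lemma sr_a (i : ℕ) (hi : i + 1 < n) : simpleRefl n i (ia i hi) = ib i hi := by
  rw [sr_eq i hi]; simp
lemma sr_b (i : ℕ) (hi : i + 1 < n) : simpleRefl n i (ib i hi) = ia i hi := by
  rw [sr_eq i hi]; simp

lemma sr_lt (i : ℕ) (hi : i + 1 < n) (p q : Fin n) (h : ¬ (p = ia i hi ∧ q = ib i hi))
    (hpq : p < q) : simpleRefl n i p < simpleRefl n i q := by
  rw [sr_eq i hi, swap_apply_def, swap_apply_def]
  simp only [ia, ib, Fin.ext_iff, Fin.lt_def] at *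
  split_ifs <;> simp_all <;> omega

lemma mem_inv (w : Perm (Fin n)) (p q : Fin n) : (p, q) ∈ invSet n w ↔ p < q ∧ w q < w p := by
  simp [invSet]

lemma len_up (w : Perm (Fin n)) (i : ℕ) (hi : i + 1 < n) (h : w (ia i hi) < w (ib i hi)) :
    len n (w * simpleRefl n i) = len n w + 1 := by
  have hs : ∀ p, simpleRefl n i (simpleRefl n i p) = p := fun p => by
    rw [← Perm.mul_apply, sr_sq]; rfl
  have key : invSet n (w * simpleRefl n i) = insert (ia i hi, ib i hi)
      ((invSet n w).map (Equiv.prodCongr (simpleRefl n i) (simpleRefl n i)).toEmbedding) := by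
    ext ⟨p, q⟩
    simp only [mem_inv, Finset.mem_insert, Finset.mem_map_equiv, Perm.mul_apply, Prod.mk.injEq, Equiv.prodCongr_symm,
      Equiv.prodCongr_apply, Prod.map_apply]
    have e : (simpleRefl n i).symm = simpleRefl n i := sr_inv i
    rw [e]
    by_cases hpq : p = ia i hi ∧ q = ib i hi
    · obtain ⟨rfl, rfl⟩ := hpq
      simp [sr_a, sr_b, h, ia_lt_ib]
    · simp only [hpq, false_or]
      refine and_congr_left fun h2 => ⟨sr_lt i hi p q hpq, fun h3 => ?_⟩
      have := sr_lt i hi _ _ (fun h4 => ?_) h3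
      · simpa [hs] using this
      · rw [h4.1, h4.2] at h2
        exact absurd h2 (not_lt.mpr h.le)
  rw [len, key, Finset.card_insert_of_notMem, Finset.card_map, len]
  simp only [mem_inv, Finset.mem_map_equiv, Equiv.prodCongr_symm,
      Equiv.prodCongr_apply, Prod.map_apply]
  have e : (simpleRefl n i).symm = simpleRefl n i := sr_inv i
  rw [e, sr_a, sr_b]
  exact fun h5 => absurd h5.1 (not_lt.mpr (ia_lt_ib i hi).le)

lemma len_down (w : Perm (Fin n)) (i : ℕ) (hi : i + 1 < n) (h : w (ib i hi) < w (ia i hi)) :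
    len n (w * simpleRefl n i) + 1 = len n w := by
  have := len_up (w * simpleRefl n i) i hi (by simpa [sr_a, sr_b] using h)
  rw [mul_assoc, sr_sq, mul_one] at this
  exact this.symm

lemma ne_ab (w : Perm (Fin n)) (i : ℕ) (hi : i + 1 < n) : w (ia i hi) ≠ w (ib i hi) :=
  fun h => (ia_lt_ib i hi).ne (w.injective h)

lemma lt_iff_down (w : Perm (Fin n)) (i : ℕ) (hi : i + 1 < n) :
    len n (w * simpleRefl n i) < len n w ↔ w (ib i hi) < w (ia i hi) := by
  rcases lt_or_gt_of_ne (ne_ab w i hi) with h | h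
  · have := len_up w i hi h
    constructor
    · omega
    · intro h2; exact absurd h (not_lt.mpr h2.le)
  · have := len_down w i hi h
    simp only [h, iff_true]; omega

lemma len_inv (w : Perm (Fin n)) : len n w⁻¹ = len n w := by
  unfold len
  refine Finset.card_bij' (fun p _ => (w⁻¹ p.2, w⁻¹ p.1)) (fun p _ => (w p.2, w p.1)) ?_ ?_ ?_ ?_
  · rintro ⟨p, q⟩; simp [invSet]; tauto
  · rintro ⟨p, q⟩; simp [invSet]; tauto
  · rintro ⟨p, q⟩; simp
  · rintro ⟨p, q⟩; simp

lemma len_inv_mul (w : Perm (Fin n)) (i : ℕ) :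
    len n (simpleRefl n i * w) = len n (w⁻¹ * simpleRefl n i) := by
  rw [← len_inv, mul_inv_rev, sr_inv]

lemma len_mul_cases (w : Perm (Fin n)) (i : ℕ) (hi : i + 1 < n) :
    len n (w * simpleRefl n i) = len n w + 1 ∨ len n (w * simpleRefl n i) + 1 = len n w := by
  rcases lt_or_gt_of_ne (ne_ab w i hi) with h | h
  · exact Or.inl (len_up w i hi h)
  · exact Or.inr (len_down w i hi h)

lemma len_mul_le (w : Perm (Fin n)) (i : ℕ) :
    len n (w * simpleRefl n i) ≤ len n w + 1 := by
  by_cases hi : i + 1 < n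
  · have := len_mul_cases w i hi; omega
  · rw [sr_out i hi, mul_one]; omega

lemma len_one : len n 1 = 0 := by
  simp only [len, invSet, Finset.card_eq_zero, Finset.filter_eq_empty_iff]
  rintro ⟨p, q⟩ _ ⟨h1, h2⟩
  exact absurd h1 (not_lt.mpr h2.le)

lemma exists_desc (w : Perm (Fin n)) (hw : w ≠ 1) :
    ∃ (i : ℕ) (hi : i + 1 < n), w (ib i hi) < w (ia i hi) := by
  by_contra! hc
  apply hw
  have hm : StrictMono w := by
    match n, w, hc with
    | 0, w, hc => exact fun x => x.elim0
    | n + 1, w, hc =>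
      rw [Fin.strictMono_iff_lt_succ]
      intro i
      exact lt_of_le_of_ne (hc i.1 (by omega)) (ne_ab w i.1 (by omega))
  have : (hm.orderIsoOfSurjective w w.surjective) = OrderIso.refl _ := Subsingleton.elim _ _
  ext x
  have h := congrArg (fun e => e x) this
  simp at h
  simp [h]

lemma len_eq_zero {w : Perm (Fin n)} (h : len n w = 0) : w = 1 := by
  by_contra hw
  obtain ⟨i, hi, h'⟩ := exists_desc w hw
  have := len_down w i hi h'
  omega

lemma len_ne_zero {w : Perm (Fin n)} (hw : w ≠ 1) : len n w ≠ 0 := fun h => hw (len_eq_zero h)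

/-- induction on right descents -/
lemma perm_induction {P : Perm (Fin n) → Prop} (h1 : P 1)
    (hs : ∀ w i, i + 1 < n → len n (w * simpleRefl n i) = len n w + 1 → P w →
      P (w * simpleRefl n i)) (w : Perm (Fin n)) : P w := by
  induction hk : len n w generalizing w with
  | zero => rw [len_eq_zero hk]; exact h1
  | succ k ih =>
    have hw : w ≠ 1 := by rintro rfl; rw [len_one] at hk; omega
    obtain ⟨i, hi, h'⟩ := exists_desc w hw
    have h2 := len_down w i hi h'
    have h3 := hs (w * simpleRefl n i) i hi
    rw [mul_assoc, sr_sq, mul_one] at h3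
    exact h3 h2.symm (ih _ (by omega))

lemma len_mul (u v : Perm (Fin n)) : len n (u * v) ≤ len n u + len n v := by
  induction v using perm_induction with
  | h1 => simp
  | hs w i hi h ih =>
    rw [h, ← mul_assoc]
    have := len_mul_le (u * w) i
    omega

/-! Demazure operators -/

lemma demX_dvd (a b : Fin n) (h : R n) : (X a - X b : R n) ∣ (h - rename (swap a b) h) := by
  rw [← Ideal.mem_span_singleton, ← Ideal.Quotient.eq]
  have : (Ideal.Quotient.mkₐ ℂ (Ideal.span {(X a - X b : R n)})) =
      (Ideal.Quotient.mkₐ ℂ (Ideal.span {(X a - X b : R n)})).comp (rename (swap a b)) := by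
    ext k
    have hab : Ideal.Quotient.mk (Ideal.span {(X a - X b : R n)}) (X a) =
        Ideal.Quotient.mk (Ideal.span {(X a - X b : R n)}) (X b) := by
      rw [Ideal.Quotient.eq]; exact Ideal.mem_span_singleton_self _
    simp only [Ideal.Quotient.mkₐ_eq_mk, AlgHom.comp_apply, rename_X, swap_apply_def]
    split_ifs with h1 h2
    · rw [h1, hab]
    · rw [h2, hab]
    · rfl
  exact DFunLike.congr_fun this h

/-- action -/
abbrev act (w : Perm (Fin n)) : R n →ₐ[ℂ] R n := rename w

lemma act_mul (u w : Perm (Fin n)) (f : R n) : act (u * w) f = act u (act w f) := by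
  rw [act, act, act, rename_rename]; rfl

lemma act_one (f : R n) : act 1 f = f := by
  simp only [act, Perm.coe_one]; exact rename_id_apply f

/-- root -/
def rt (i : ℕ) (hi : i + 1 < n) : R n := X (ia i hi) - X (ib i hi)

lemma demX_spec (i : ℕ) (hi : i + 1 < n) (h : R n) :
    rt i hi * demX n i h = h - act (simpleRefl n i) h := by
  have hd := demX_dvd (ia i hi) (ib i hi) h
  rw [sr_eq i hi]
  have h1 : demX n i h = hd.choose := by
    unfold demX
    rw [dif_pos hi]
    exact dif_pos hd
  rw [h1]
  exact hd.choose_spec.symm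

lemma X_sub_ne {a b : Fin n} (h : a ≠ b) : (X a - X b : R n) ≠ 0 := by
  rw [sub_ne_zero]; exact fun h' => h (X_injective h')

lemma rt_ne (i : ℕ) (hi : i + 1 < n) : (rt i hi : R n) ≠ 0 := X_sub_ne (ia_lt_ib i hi).ne

lemma act_rt (i : ℕ) (hi : i + 1 < n) : act (simpleRefl n i) (rt i hi) = - rt i hi := by
  simp [rt, sr_a, sr_b]

lemma act_demX (i : ℕ) (hi : i + 1 < n) (h : R n) :
    act (simpleRefl n i) (demX n i h) = demX n i h := by
  have h1 := demX_spec i hi h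
  have h2 := congrArg (act (simpleRefl n i)) h1
  rw [map_mul, act_rt, map_sub, ← act_mul, sr_sq, act_one] at h2
  apply mul_left_cancel₀ (rt_ne i hi)
  linear_combination -h2 - h1

lemma demX_invariant (i : ℕ) (hi : i + 1 < n) (h : R n) (hh : act (simpleRefl n i) h = h) :
    demX n i h = 0 := by
  have h1 := demX_spec i hi h
  rw [hh, sub_self] at h1
  exact (mul_eq_zero.mp h1).resolve_left (rt_ne i hi)

lemma demX_demX (i : ℕ) (hi : i + 1 < n) (h : R n) : demX n i (demX n i h) = 0 :=
  demX_invariant i hi _ (act_demX i hi h)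

end S5
namespace S5
open Equiv
variable {n : ℕ}

lemma act_rt' (w : Perm (Fin n)) (i : ℕ) (hi : i + 1 < n) :
    act w (rt i hi) = X (w (ia i hi)) - X (w (ib i hi)) := by
  simp [rt]

lemma sr_fix (i : ℕ) (hi : i + 1 < n) (k : Fin n) (h1 : k ≠ ia i hi) (h2 : k ≠ ib i hi) :
    simpleRefl n i k = k := by
  rw [sr_eq i hi]; exact swap_apply_of_ne_of_ne h1 h2

lemma sr_val (i : ℕ) (hi : i + 1 < n) (k : Fin n) :
    (simpleRefl n i k : ℕ) = if (k : ℕ) = i then i + 1 else if (k : ℕ) = i + 1 then i else k := by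
  rw [sr_eq i hi, swap_apply_def]
  simp only [ia, ib, Fin.ext_iff]
  split_ifs <;> rfl

lemma sr_comm (i j : ℕ) (hij : i + 1 < j) :
    simpleRefl n i * simpleRefl n j = simpleRefl n j * simpleRefl n i := by
  by_cases hj : j + 1 < n
  · have hi : i + 1 < n := by omega
    ext k
    simp only [Perm.mul_apply, sr_val i hi, sr_val j hj]
    split_ifs <;> omega
  · rw [sr_out j hj]; simp

lemma sr_braid (i : ℕ) (hi : i + 2 < n) :
    simpleRefl n i * simpleRefl n (i + 1) * simpleRefl n i =
      simpleRefl n (i + 1) * simpleRefl n i * simpleRefl n (i + 1) := by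
  have hi1 : i + 1 < n := by omega
  ext k
  simp only [Perm.mul_apply, sr_val i hi1, sr_val (i + 1) hi]
  split_ifs <;> omega

lemma dem_comm (i j : ℕ) (hij : i + 1 < j) (hj : j + 1 < n) (h : R n) :
    demX n i (demX n j h) = demX n j (demX n i h) := by
  have hi : i + 1 < n := by omega
  have e1 : act (simpleRefl n i) (rt j hj) = rt j hj := by
    rw [act_rt', rt, sr_fix i hi, sr_fix i hi] <;> simp [ia, ib] <;> omega
  have e2 : act (simpleRefl n j) (rt i hi) = rt i hi := by
    rw [act_rt', rt, sr_fix j hj, sr_fix j hj] <;> simp [ia, ib] <;> omega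
  have a1 := demX_spec i hi (demX n j h)
  have a2 := demX_spec j hj h
  have a3 := congrArg (act (simpleRefl n i)) a2
  rw [map_mul, map_sub, e1] at a3
  have b1 := demX_spec j hj (demX n i h)
  have b2 := demX_spec i hi h
  have b3 := congrArg (act (simpleRefl n j)) b2
  rw [map_mul, map_sub, e2, ← act_mul, ← sr_comm i j hij, act_mul] at b3
  apply mul_left_cancel₀ (mul_ne_zero (rt_ne i hi) (rt_ne j hj))
  linear_combination (rt j hj) * a1 + a2 - a3 - (rt i hi) * b1 - b2 + b3

lemma dem_braid (i : ℕ) (hj : i + 1 + 1 < n) (h : R n) :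
    demX n i (demX n (i + 1) (demX n i h)) = demX n (i + 1) (demX n i (demX n (i + 1) h)) := by
  have hi : i + 1 < n := by omega
  set s := simpleRefl n i with hs
  set t := simpleRefl n (i + 1) with ht
  set p := rt i hi with hp
  set q := rt (i + 1) hj with hq
  have hba : (ib i hi : Fin n) = ia (i + 1) hj := rfl
  have sp : act s p = -p := act_rt i hi
  have tq : act t q = -q := act_rt (i + 1) hj
  have sq : act s q = p + q := by
    rw [hq, act_rt', ← hba, sr_b, sr_fix i hi (ib (i+1) hj)] <;>
    simp [ia, ib, hp, rt]
    omega
  have tp : act t p = p + q := by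
    rw [hp, act_rt', hba, sr_a, sr_fix (i + 1) hj (ia i hi)] <;>
    simp [ia, ib, hq, rt]
    omega
  have hpq : p + q ≠ 0 := by
    have : p + q = X (ia i hi) - X (ib (i + 1) hj) := by simp [hp, hq, rt, hba]
    rw [this]; apply X_sub_ne; simp [ia, ib]; omega
  have ss : ∀ f : R n, act s (act s f) = f := fun f => by rw [← act_mul, sr_sq, act_one]
  have tt : ∀ f : R n, act t (act t f) = f := fun f => by rw [← act_mul, sr_sq, act_one]
  have br : ∀ f : R n, act s (act t (act s f)) = act t (act s (act t f)) := fun f => by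
    rw [← act_mul, ← act_mul, ← act_mul, ← act_mul, sr_braid i hj]
  -- first side
  have a1 := demX_spec i hi (demX n (i + 1) (demX n i h))
  have a2 := demX_spec (i + 1) hj (demX n i h)
  have a4 := demX_spec i hi h
  have a7 := act_demX i hi h
  have b1 := demX_spec (i + 1) hj (demX n i (demX n (i + 1) h))
  have b2 := demX_spec i hi (demX n (i + 1) h)
  have b4 := demX_spec (i + 1) hj h
  have b7 := act_demX (i + 1) hj h
  rw [← hs] at a1 a4 a7 b2
  rw [← ht] at a2 b1 b4 b7
  rw [← hp] at a1 a4 b2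
  rw [← hq] at a2 b1 b4
  have a3 := congrArg (act s) a2
  have a5 := congrArg (act t) a4
  have a6 := congrArg (act s) a5
  have b3 := congrArg (act t) b2
  have b5 := congrArg (act s) b4
  have b6 := congrArg (act t) b5
  simp only [map_mul, map_sub, map_add, sp, sq, tp, tq, a7, b7] at a3 a5 a6 b3 b5 b6
  rw [← br] at b6
  apply mul_left_cancel₀ (mul_ne_zero (mul_ne_zero (rt_ne i hi) (rt_ne (i + 1) hj)) hpq)
  simp only [← hp, ← hq]
  linear_combination q * (p + q) * a1 + (p + q) * a2 - q * a3 + a4 - a5 + a6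
    - (p * (p + q) * b1 + (p + q) * b2 - p * b3 + b4 - b5 + b6)

/-! Reduced words -/

lemma len_prod_le (l : List ℕ) : len n (l.map (simpleRefl n)).prod ≤ l.length := by
  induction l with
  | nil => simp [len_one]
  | cons i l ih =>
    simp only [List.map_cons, List.prod_cons, List.length_cons]
    have := len_mul_le ((l.map (simpleRefl n)).prod)⁻¹ i
    rw [len_inv_mul]
    rw [len_inv] at this
    omega

lemma red_cons {w : Perm (Fin n)} {i : ℕ} {l : List ℕ} (h : IsReducedWord n w (i :: l)) :
    i + 1 < n ∧ IsReducedWord n (simpleRefl n i * w) l ∧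
      len n (simpleRefl n i * w) + 1 = len n w := by
  obtain ⟨h1, h2⟩ := h
  simp only [List.map_cons, List.prod_cons, List.length_cons] at h1 h2
  have h3 := len_prod_le (n := n) l
  have h5 : simpleRefl n i * w = (l.map (simpleRefl n)).prod := by
    rw [← h1, ← mul_assoc, sr_sq, one_mul]
  have hi : i + 1 < n := by
    by_contra hi
    rw [sr_out i hi, one_mul] at h1
    rw [h1] at h3
    omega
  have h6 := len_mul_cases w⁻¹ i hi
  rw [← len_inv_mul, len_inv, h5] at h6
  refine ⟨hi, ⟨h5.symm, ?_⟩, ?_⟩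
  · rw [h5]; omega
  · rw [h5]; omega

lemma red_of_cons {w : Perm (Fin n)} {i : ℕ} {l : List ℕ}
    (h : IsReducedWord n (simpleRefl n i * w) l) (h' : len n (simpleRefl n i * w) + 1 = len n w) :
    IsReducedWord n w (i :: l) := by
  refine ⟨?_, ?_⟩
  · rw [List.map_cons, List.prod_cons, h.1, ← mul_assoc, sr_sq, one_mul]
  · rw [List.length_cons, h.2, h']

lemma left_iff (w : Perm (Fin n)) (i : ℕ) (hi : i + 1 < n) :
    len n (simpleRefl n i * w) + 1 = len n w ↔ w⁻¹ (ib i hi) < w⁻¹ (ia i hi) := by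
  rw [← lt_iff_down, len_inv_mul, len_inv]
  have h6 := len_mul_cases w⁻¹ i hi
  rw [len_inv] at h6
  omega

lemma exists_red (w : Perm (Fin n)) : ∃ l, IsReducedWord n w l := by
  induction hk : len n w generalizing w with
  | zero => exact ⟨[], by simp [len_eq_zero hk], by simp [hk]⟩
  | succ k ih =>
    have hw : w⁻¹ ≠ 1 := by
      intro h; rw [← len_inv, h, len_one] at hk; omega
    obtain ⟨i, hi, h⟩ := exists_desc _ hw
    have h2 := (left_iff w i hi).mpr h
    obtain ⟨l, hl⟩ := ih (simpleRefl n i * w) (by omega)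
    exact ⟨_, red_of_cons hl h2⟩

lemma red_unique (k : ℕ) : ∀ (w : Perm (Fin n)), len n w = k → ∀ l l', IsReducedWord n w l →
    IsReducedWord n w l' → ∀ h, demWord n l h = demWord n l' h := by
  induction k with
  | zero =>
    intro w hw l l' h h'
    have h1 := h.2; have h2 := h'.2
    rw [hw, List.length_eq_zero_iff] at h1 h2
    simp [h1, h2]
  | succ k ih =>
    -- the key step with ordered heads
    have main : ∀ (w : Perm (Fin n)), len n w = k + 1 → ∀ i j l l', i ≤ j →
        IsReducedWord n w (i :: l) →
        IsReducedWord n w (j :: l') → ∀ h, demWord n (i :: l) h = demWord n (j :: l') h := by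
      intro w hw i j l l' hij hl hl' h
      obtain ⟨hi, hr, hlen⟩ := red_cons hl
      obtain ⟨hj, hr', hlen'⟩ := red_cons hl'
      have hdi := (left_iff w i hi).mp hlen
      have hdj := (left_iff w j hj).mp hlen'
      have IHi := ih (simpleRefl n i * w) (by omega)
      have IHj := ih (simpleRefl n j * w) (by omega)
      rcases Nat.lt_trichotomy j (i + 1) with h1 | h1 | h1
      · obtain rfl : j = i := by omega
        have := IHi l l' hr hr' h
        simp only [demWord, List.foldr_cons] at this ⊢
        rw [this]
      · subst h1
        have fix1 : simpleRefl n (i + 1) (ia i hi) = ia i hi := by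
          apply sr_fix (i + 1) hj <;> simp [ia, ib]; omega
        have fix2 : simpleRefl n i (ib (i + 1) hj) = ib (i + 1) hj := by
          apply sr_fix i hi <;> simp [ia, ib]; omega
        have hba : (ia (i + 1) hj : Fin n) = ib i hi := rfl
        have sb : simpleRefl n i (ib i hi) = ia i hi := sr_b i hi
        have sa : simpleRefl n i (ia i hi) = ib i hi := sr_a i hi
        have tb : simpleRefl n (i + 1) (ib (i + 1) hj) = ib i hi := sr_b (i + 1) hj
        have ta : simpleRefl n (i + 1) (ib i hi) = ib (i + 1) hj := sr_a (i + 1) hj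
        rw [hba] at hdj
        -- lengths
        have A1 : len n (simpleRefl n (i + 1) * (simpleRefl n i * w)) + 1 =
            len n (simpleRefl n i * w) := by
          rw [left_iff _ _ hj, mul_inv_rev, sr_inv, hba]
          simp only [Perm.mul_apply, fix2, sb]
          exact hdj.trans hdi
        have A2 : len n (simpleRefl n i * (simpleRefl n (i + 1) * (simpleRefl n i * w))) + 1 =
            len n (simpleRefl n (i + 1) * (simpleRefl n i * w)) := by
          rw [left_iff _ _ hi, mul_inv_rev, mul_inv_rev, sr_inv, sr_inv]
          simp only [Perm.mul_apply, fix2, fix1, ta, sa]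
          exact hdj
        have B1 : len n (simpleRefl n i * (simpleRefl n (i + 1) * w)) + 1 =
            len n (simpleRefl n (i + 1) * w) := by
          rw [left_iff _ _ hi, mul_inv_rev, sr_inv]
          simp only [Perm.mul_apply, fix1, ta]
          exact hdj.trans hdi
        have B2 : len n (simpleRefl n (i + 1) * (simpleRefl n i * (simpleRefl n (i + 1) * w))) + 1 =
            len n (simpleRefl n i * (simpleRefl n (i + 1) * w)) := by
          rw [left_iff _ _ hj, mul_inv_rev, mul_inv_rev, sr_inv, sr_inv, hba]
          simp only [Perm.mul_apply, fix2, fix1, tb, sb]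
          exact hdi
        obtain ⟨m, hm⟩ := exists_red (simpleRefl n i * (simpleRefl n (i + 1) * (simpleRefl n i * w)))
        have hm' : IsReducedWord n
            (simpleRefl n (i + 1) * (simpleRefl n i * (simpleRefl n (i + 1) * w))) m := by
          have := sr_braid (n := n) i hj
          simp only [← mul_assoc] at hm ⊢
          rwa [← this]
        have e1 := IHi l _ hr (red_of_cons (red_of_cons hm A2) A1) h
        have e2 := IHj l' _ hr' (red_of_cons (red_of_cons hm' B2) B1) h
        simp only [demWord, List.foldr_cons] at e1 e2 ⊢
        rw [e1, e2, dem_braid i hj]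
      · have hc := sr_comm (n := n) i j h1
        have A1 : len n (simpleRefl n j * (simpleRefl n i * w)) + 1 =
            len n (simpleRefl n i * w) := by
          rw [left_iff _ _ hj, mul_inv_rev, sr_inv]
          simp only [Perm.mul_apply]
          rw [sr_fix i hi, sr_fix i hi]
          · exact hdj
          all_goals simp [ia, ib]; try omega
        have B1 : len n (simpleRefl n i * (simpleRefl n j * w)) + 1 =
            len n (simpleRefl n j * w) := by
          rw [left_iff _ _ hi, mul_inv_rev, sr_inv]
          simp only [Perm.mul_apply]
          rw [sr_fix j hj, sr_fix j hj]
          · exact hdi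
          all_goals simp [ia, ib]; try omega
        obtain ⟨m, hm⟩ := exists_red (simpleRefl n j * (simpleRefl n i * w))
        have hm' : IsReducedWord n (simpleRefl n i * (simpleRefl n j * w)) m := by
          rw [← mul_assoc] at hm ⊢
          rwa [hc]
        have e1 := IHi l _ hr (red_of_cons hm A1) h
        have e2 := IHj l' _ hr' (red_of_cons hm' B1) h
        simp only [demWord, List.foldr_cons] at e1 e2 ⊢
        rw [e1, e2, dem_comm i j h1 hj]
    intro w hw l l' hl hl' h
    match l, l', hl, hl' with
    | [], _, hl, _ => have := hl.2; simp at this; omega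
    | _ :: _, [], _, hl' => have := hl'.2; simp at this; omega
    | i :: l, j :: l', hl, hl' =>
      rcases le_total i j with hij | hij
      · exact main w hw i j l l' hij hl hl' h
      · exact (main w hw j i l' l hij hl' hl h).symm

lemma dem_eq (w : Perm (Fin n)) (l : List ℕ) (hl : IsReducedWord n w l) (h : R n) :
    dem n w h = demWord n l h := by
  have he : ∃ l, IsReducedWord n w l := ⟨l, hl⟩
  rw [dem, dif_pos he]
  exact red_unique _ w rfl _ _ he.choose_spec hl h

lemma dem_step (w : Perm (Fin n)) (i : ℕ) (h' : len n (simpleRefl n i * w) + 1 = len n w) (h : R n) :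
    dem n w h = demX n i (dem n (simpleRefl n i * w) h) := by
  obtain ⟨l, hl⟩ := exists_red (simpleRefl n i * w)
  rw [dem_eq _ _ hl, dem_eq _ _ (red_of_cons hl h')]
  rfl

/-- (A) -/
lemma demX_schubert (u : Perm (Fin n)) (i : ℕ) (hi : i + 1 < n) :
    demX n i (schubert n u) =
      if len n (u * simpleRefl n i) < len n u then schubert n (u * simpleRefl n i) else 0 := by
  have key : ∀ u : Perm (Fin n), len n (u * simpleRefl n i) < len n u →
      demX n i (schubert n u) = schubert n (u * simpleRefl n i) := by
    intro u hu
    rw [lt_iff_down u i hi] at hu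
    have h2 : simpleRefl n i * ((u * simpleRefl n i)⁻¹ * w₀ n) = u⁻¹ * w₀ n := by
      rw [mul_inv_rev, sr_inv, ← mul_assoc, ← mul_assoc, sr_sq, one_mul]
    rw [schubert, schubert, dem_step ((u * simpleRefl n i)⁻¹ * w₀ n) i, h2]
    rw [left_iff _ _ hi]
    simp only [mul_inv_rev, inv_inv, Perm.mul_apply, sr_a, sr_b]
    have e : ((w₀ n)⁻¹ : Perm (Fin n)) = Fin.revPerm := rfl
    rw [e]
    simpa using hu
  split_ifs with h
  · exact key u h
  · have h2 : len n (u * simpleRefl n i * simpleRefl n i) < len n (u * simpleRefl n i) := by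
      rw [mul_assoc, sr_sq, mul_one]
      have := len_mul_cases u i hi
      omega
    have := key _ h2
    rw [mul_assoc, sr_sq, mul_one] at this
    rw [← this, demX_demX i hi]

end S5
namespace S5
open Equiv
variable {n : ℕ}

/-- scaling by two -/
def scal : R n →ₐ[ℂ] R n := aeval (fun i => (2 : R n) * X i)

/-- homogeneity, tested at the scaling by two -/
def Hom (d : ℕ) (f : R n) : Prop := scal f = (2 : R n) ^ d * f

lemma two_ne : (2 : R n) ≠ 0 := two_ne_zero

lemma act_two (w : Perm (Fin n)) : act w (2 : R n) = 2 := map_ofNat _ 2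

lemma scal_act (w : Perm (Fin n)) (f : R n) : scal (act w f) = act w (scal f) := by
  have : (scal (n := n)).comp (act w) = (act w).comp scal := by
    ext i; simp [scal, act_two]
  exact DFunLike.congr_fun this f

lemma Hom.act {d : ℕ} {f : R n} (h : Hom d f) (w : Perm (Fin n)) : Hom d (act w f) := by
  unfold Hom at *
  rw [scal_act, h, map_mul, map_pow, act_two]

lemma Hom.demX {d : ℕ} {f : R n} (h : Hom (d + 1) f) (i : ℕ) (hi : i + 1 < n) :
    Hom d (demX n i f) := by
  have h1 := demX_spec i hi f
  have h2 := congrArg scal h1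
  have h3 := h.act (simpleRefl n i)
  unfold Hom at *
  have h4 : scal (rt i hi) = 2 * rt i hi := by simp [scal, rt]; ring
  rw [map_mul, map_sub, h, h3, h4] at h2
  apply mul_left_cancel₀ (mul_ne_zero two_ne (rt_ne i hi))
  rw [h2, ← mul_sub, ← h1]
  ring

lemma Hom.const {d : ℕ} {f : R n} (h : Hom d f) (hd : d ≠ 0) : constantCoeff f = 0 := by
  have h1 := congrArg constantCoeff h
  have h2 : constantCoeff (scal f) = constantCoeff f := by
    have : (constantCoeff (R := ℂ) (σ := Fin n)).comp (scal (n := n)).toRingHom = constantCoeff := by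
      ext i <;> simp [scal]
    exact DFunLike.congr_fun this f
  rw [h2, map_mul, map_pow] at h1
  have h3 : constantCoeff (2 : R n) = 2 := map_ofNat _ 2
  rw [h3] at h1
  have h4 : (1 : ℂ) ≠ 2 ^ d := by
    intro h5
    have h6 : (1 : ℕ) = 2 ^ d := by exact_mod_cast h5
    have := Nat.one_lt_two_pow hd
    omega
  have : (1 - 2 ^ d) * constantCoeff f = 0 := by linear_combination h1
  exact (mul_eq_zero.mp this).resolve_left (sub_ne_zero.mpr h4)

/-- exponents bounded by the staircase -/
def Bd (f : R n) : Prop := ∀ k : Fin n, degreeOf k f ≤ n - 1 - k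

lemma degreeOf_act (s : Perm (Fin n)) (k : Fin n) (f : R n) :
    degreeOf (s k) (act s f) = degreeOf k f := degreeOf_rename_of_injective s.injective k

lemma degreeOf_rt_le (i : ℕ) (hi : i + 1 < n) : 
    degreeOf (ia i hi) (rt i hi) = 1 ∧ degreeOf (ib i hi) (rt i hi) = 1 := by
  have hne := (ia_lt_ib i hi).ne
  have key : ∀ a b : Fin n, a ≠ b → degreeOf a (X a - X b : R n) = 1 := by
    intro a b hab
    apply le_antisymm
    · refine (degreeOf_sub_le _ _ _).trans ?_
      simp [degreeOf_X]; split_ifs <;> simp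
    · by_contra hc
      have h0 : degreeOf a (X a - X b : R n) = 0 := by omega
      have h1 : degreeOf a (X a : R n) ≤ max (degreeOf a (X a - X b : R n)) (degreeOf a (X b : R n)) := by
        have := degreeOf_add_le a (X a - X b : R n) (X b)
        rwa [sub_add_cancel] at this
      rw [h0] at h1
      simp [degreeOf_X, hab] at h1
  refine ⟨key _ _ hne, ?_⟩
  have := key _ _ hne.symm
  rw [rt, ← neg_sub, degreeOf_neg]; exact this

lemma Bd.demX {f : R n} (h : Bd f) (i : ℕ) (hi : i + 1 < n) : Bd (demX n i f) := by
  intro k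
  by_cases h0 : _root_.demX n i f = 0
  · rw [h0]; simp
  have h1 := congrArg (degreeOf k) (demX_spec i hi f)
  rw [degreeOf_mul_eq (rt_ne i hi) h0] at h1
  have h2 := degreeOf_sub_le k f (act (simpleRefl n i) f)
  have h3 : degreeOf k (act (simpleRefl n i) f) = degreeOf (simpleRefl n i k) f := by
    conv_lhs => rw [show k = simpleRefl n i (simpleRefl n i k) by
      rw [← Perm.mul_apply, sr_sq]; rfl]
    exact degreeOf_act _ _ _
  rw [← h1, h3] at h2
  have ha := h (ia i hi)
  have hb := h (ib i hi)
  have hk := h k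
  obtain ⟨ra, rb⟩ := degreeOf_rt_le i hi
  by_cases ka : k = ia i hi
  · subst ka
    rw [sr_a, ra] at h2
    simp only [ia, ib] at *
    omega
  by_cases kb : k = ib i hi
  · subst kb
    rw [sr_b, rb] at h2
    simp only [ia, ib] at *
    omega
  rw [sr_fix i hi k ka kb] at h2
  omega

lemma exists_asc (w : Perm (Fin n)) (hw : w ≠ w₀ n) :
    ∃ (i : ℕ) (hi : i + 1 < n), w (ia i hi) < w (ib i hi) := by
  obtain ⟨i, hi, h⟩ := exists_desc (w₀ n * w) (by
    intro h
    apply hw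
    have : (w₀ n)⁻¹ = w₀ n := rfl
    rw [← this]; exact eq_inv_of_mul_eq_one_right h)
  refine ⟨i, hi, ?_⟩
  simpa [w₀] using h

lemma len_le (w : Perm (Fin n)) : len n w ≤ n * n := by
  unfold len
  refine (Finset.card_le_univ _).trans ?_
  simp

/-- downward induction from w₀ -/
lemma down_induction {P : Perm (Fin n) → Prop} (h1 : P (w₀ n))
    (hs : ∀ w i, i + 1 < n → len n (w * simpleRefl n i) + 1 = len n w → P w →
      P (w * simpleRefl n i)) (w : Perm (Fin n)) : P w := by
  induction hk : n * n - len n w generalizing w with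
  | zero =>
    by_cases hw : w = w₀ n
    · rw [hw]; exact h1
    obtain ⟨i, hi, h⟩ := exists_asc w hw
    have := len_up w i hi h
    have := len_le (w * simpleRefl n i)
    omega
  | succ k ih =>
    by_cases hw : w = w₀ n
    · rw [hw]; exact h1
    obtain ⟨i, hi, h⟩ := exists_asc w hw
    have h2 := len_up w i hi h
    have h3 := hs (w * simpleRefl n i) i hi
    rw [mul_assoc, sr_sq, mul_one] at h3
    exact h3 h2.symm (ih _ (by omega))

lemma schubert_w0 : schubert n (w₀ n) = staircase n := by
  rw [schubert, inv_mul_cancel, dem_eq 1 [] ⟨by simp, by simp [len_one]⟩]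
  rfl

lemma len_w0 : len n (w₀ n) = ∑ i : Fin n, (n - 1 - (i : ℕ)) := by
  rw [len, invSet, Finset.card_filter, Fintype.sum_prod_type]
  refine Finset.sum_congr rfl fun i _ => ?_
  rw [← Finset.card_filter, ← Fin.card_Ioi]
  congr 1
  ext j
  simp [w₀]

lemma schubert_hom (w : Perm (Fin n)) : Hom (len n w) (schubert n w) := by
  induction w using down_induction with
  | h1 =>
    rw [schubert_w0, len_w0, Hom, staircase, map_prod]
    simp only [map_pow, scal, aeval_X, mul_pow]
    rw [Finset.prod_mul_distrib, Finset.prod_pow_eq_pow_sum]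
  | hs w i hi h ih =>
    have h2 := demX_schubert w i hi
    rw [if_pos (by omega)] at h2
    rw [← h2]
    apply Hom.demX _ i hi
    rw [h]; exact ih

lemma schubert_bd (w : Perm (Fin n)) : Bd (schubert n w) := by
  induction w using down_induction with
  | h1 =>
    rw [schubert_w0, staircase]
    intro k
    refine (degreeOf_prod_le _ _ _).trans ?_
    rw [Finset.sum_eq_single k]
    · refine (degreeOf_pow_le _ _ _).trans ?_
      simp [degreeOf_X]
    · intro b _ hb
      have := degreeOf_pow_le k (X b : R n) (n - 1 - (b : ℕ))
      simp [degreeOf_X, hb.symm] at this ⊢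
      exact this
    · simp
  | hs w i hi h ih =>
    have h2 := demX_schubert w i hi
    rw [if_pos (by omega)] at h2
    rw [← h2]
    exact Bd.demX ih i hi

/-- monomial -/
def mon (a : Fin n → ℕ) : R n := ∏ i, X i ^ a i

lemma mon_ne (a : Fin n → ℕ) : (mon a : R n) ≠ 0 := by
  unfold mon
  exact Finset.prod_ne_zero_iff.mpr fun i _ => pow_ne_zero _ (X_ne_zero i)

lemma mon_step (a : Fin n → ℕ) (i : ℕ) (hi : i + 1 < n) (h : a (ia i hi) = a (ib i hi) + 1) :
    demX n i (mon a) = mon (Function.update a (ia i hi) (a (ib i hi))) := by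
  set a' := Function.update a (ia i hi) (a (ib i hi)) with ha'
  have hne := (ia_lt_ib i hi).ne
  have e1 : (mon a : R n) = X (ia i hi) * mon a' := by
    unfold mon
    rw [← Finset.mul_prod_erase _ _ (Finset.mem_univ (ia i hi)),
      ← Finset.mul_prod_erase _ (fun j => (X j : R n) ^ a' j) (Finset.mem_univ (ia i hi)), ← mul_assoc]
    congr 1
    · simp only [ha', Function.update_self, h]; ring
    · apply Finset.prod_congr rfl
      intro x hx
      rw [ha', Function.update_of_ne (Finset.ne_of_mem_erase hx)]
  have e2 : act (simpleRefl n i) (mon a' : R n) = mon a' := by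
    unfold mon
    rw [map_prod]
    simp only [map_pow, rename_X]
    refine Fintype.prod_equiv (simpleRefl n i) _ _ fun x => ?_
    congr 1
    by_cases xa : x = ia i hi
    · subst xa; rw [sr_a, ha', Function.update_self, Function.update_of_ne hne.symm]
    by_cases xb : x = ib i hi
    · subst xb; rw [sr_b, ha', Function.update_self, Function.update_of_ne hne.symm]
    rw [sr_fix i hi x xa xb]
  apply mul_left_cancel₀ (rt_ne i hi)
  rw [demX_spec i hi, e1, map_mul, e2]
  simp only [rename_X, sr_a, rt]
  ring

/-- steps at most one, ending with zero -/
def Nice (a : Fin n → ℕ) : Prop :=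
  (∀ i (hi : i + 1 < n), a (ia i hi) = a (ib i hi) ∨ a (ia i hi) = a (ib i hi) + 1) ∧
  (∀ k : Fin n, (k : ℕ) + 1 = n → a k = 0)

lemma Nice.zero {a : Fin n → ℕ} (ha : Nice a) (h : ∀ i (hi : i + 1 < n), a (ia i hi) = a (ib i hi)) :
    a = 0 := by
  have : ∀ m, ∀ k : Fin n, (k : ℕ) + 1 + m = n → a k = 0 := by
    intro m
    induction m with
    | zero => exact fun k hk => ha.2 k hk
    | succ m ih =>
      intro k hk
      have := h k (by omega)
      rw [show k = ia k.1 (by omega) from rfl, this]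
      apply ih
      simp [ib]; omega
  funext k
  exact this (n - 1 - k) k (by omega)

lemma Nice.step {a : Fin n → ℕ} (ha : Nice a) (h0 : a ≠ 0) :
    ∃ i, ∃ hi : i + 1 < n, a (ia i hi) = a (ib i hi) + 1 ∧
      Nice (Function.update a (ia i hi) (a (ib i hi))) := by
  classical
  have hex : ∃ i, ∃ hi : i + 1 < n, a (ia i hi) = a (ib i hi) + 1 := by
    by_contra! hc
    exact h0 (ha.zero fun i hi => (ha.1 i hi).resolve_right (hc i hi))
  obtain ⟨hi, h⟩ := Nat.find_spec hex
  have hmin := fun m => Nat.find_min hex (m := m)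
  set i := Nat.find hex
  refine ⟨i, hi, h, ?_, ?_⟩
  · intro k hk
    simp only [Function.update_apply]
    by_cases h1 : k = i
    · subst h1
      rw [if_pos rfl, if_neg (ia_lt_ib _ hi).ne']
      exact Or.inl rfl
    · rw [if_neg (by simp [ia, h1])]
      by_cases h2 : k + 1 = i
      · have h3 : ib k hk = ia i hi := by simp [ia, ib, h2]
        rw [if_pos h3]
        have h4 := hmin k (by omega)
        have h5 := ha.1 k hk
        have h6 := h5.resolve_right (fun h => h4 ⟨hk, h⟩)
        rw [h6, h3, h]; exact Or.inr rfl
      · rw [if_neg (by simp [ia, ib, h2])]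
        exact ha.1 k hk
  · intro k hk
    rw [Function.update_of_ne]
    · exact ha.2 k hk
    · rintro rfl
      simp [ia] at hk
      omega

lemma schubert_one : schubert n 1 = 1 := by
  have key : ∀ k, ∀ w : Perm (Fin n), len n w = k → ∀ a : Fin n → ℕ, Nice a →
      schubert n w = mon a → ∃ w : Perm (Fin n), schubert n w = 1 := by
    intro k
    induction k using Nat.strong_induction_on with
    | _ k ih =>
      intro w hw a ha hs
      by_cases h0 : a = 0
      · exact ⟨w, by rw [hs, h0]; simp [mon]⟩
      obtain ⟨i, hi, h1, h2⟩ := ha.step h0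
      have h3 := mon_step a i hi h1
      rw [← hs, demX_schubert w i hi] at h3
      split_ifs at h3 with hlt
      · exact ih _ (hw ▸ hlt) _ rfl _ h2 h3
      · exact absurd h3.symm (mon_ne _)
  obtain ⟨w, hw⟩ := key _ (w₀ n) rfl (fun i => n - 1 - (i : ℕ)) (by
    refine ⟨?_, ?_⟩
    · intro i hi; right; simp [ia, ib]; omega
    · intro k hk; show n - 1 - (k : ℕ) = 0; omega) schubert_w0
  have h1 := schubert_hom w
  by_cases hw1 : w = 1
  · rwa [hw1] at hw
  have := h1.const (len_ne_zero hw1)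
  rw [hw] at this
  simp at this

end S5
namespace S5
open Equiv
variable {n : ℕ}

open Classical in
/-- reduced factorizations `w = v⁻¹ u`, as pairs `(u, v)` -/
def Fac (w : Perm (Fin n)) : Finset (Perm (Fin n) × Perm (Fin n)) :=
  Finset.univ.filter fun p => w = p.2⁻¹ * p.1 ∧ len n w = len n p.2 + len n p.1

lemma mem_fac (w u v : Perm (Fin n)) :
    (u, v) ∈ Fac w ↔ w = v⁻¹ * u ∧ len n w = len n v + len n u := by
  simp [Fac]

lemma fac_down {w u v : Perm (Fin n)} (i : ℕ) (hi : i + 1 < n) (h : (u, v) ∈ Fac w)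
    (hu : len n (u * simpleRefl n i) < len n u) :
    len n (w * simpleRefl n i) < len n w ∧
      (u * simpleRefl n i, v) ∈ Fac (w * simpleRefl n i) := by
  rw [mem_fac] at h ⊢
  obtain ⟨h1, h2⟩ := h
  have h3 : w * simpleRefl n i = v⁻¹ * (u * simpleRefl n i) := by rw [h1, mul_assoc]
  have h4 := len_mul v⁻¹ (u * simpleRefl n i)
  rw [← h3, len_inv] at h4
  have h5 := len_mul_cases w i hi
  have h6 := len_mul_cases u i hi
  exact ⟨by omega, h3, by omega⟩

lemma fac_up {w u v : Perm (Fin n)} (i : ℕ) (hi : i + 1 < n)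
    (hw : len n (w * simpleRefl n i) < len n w)
    (h : (u, v) ∈ Fac (w * simpleRefl n i)) :
    (u * simpleRefl n i, v) ∈ Fac w ∧ len n u < len n (u * simpleRefl n i) := by
  rw [mem_fac] at h ⊢
  obtain ⟨h1, h2⟩ := h
  have h3 : w = v⁻¹ * (u * simpleRefl n i) := by
    rw [← mul_assoc, ← h1, mul_assoc, sr_sq, mul_one]
  have h4 := len_mul v⁻¹ (u * simpleRefl n i)
  rw [← h3, len_inv] at h4
  have h5 := len_mul_cases w i hi
  have h6 := len_mul_cases u i hi
  exact ⟨⟨h3, by omega⟩, by omega⟩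

lemma fac_right (w : Perm (Fin n)) (i : ℕ) (hi : i + 1 < n) (f : Perm (Fin n) → Perm (Fin n) → R n) :
    ∑ p ∈ Fac w, (if len n (p.1 * simpleRefl n i) < len n p.1 then f (p.1 * simpleRefl n i) p.2 else 0)
    = if len n (w * simpleRefl n i) < len n w then ∑ p ∈ Fac (w * simpleRefl n i), f p.1 p.2 else 0 := by
  have hss : ∀ u : Perm (Fin n), u * simpleRefl n i * simpleRefl n i = u := fun u => by
    rw [mul_assoc, sr_sq, mul_one]
  rw [← Finset.sum_filter]
  split_ifs with h
  · refine Finset.sum_bij' (fun p _ => (p.1 * simpleRefl n i, p.2))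
      (fun p _ => (p.1 * simpleRefl n i, p.2)) ?_ ?_ ?_ ?_ ?_
    · rintro ⟨u, v⟩ hp
      rw [Finset.mem_filter] at hp
      exact (fac_down i hi hp.1 hp.2).2
    · rintro ⟨u, v⟩ hp
      rw [Finset.mem_filter]
      obtain ⟨h1, h2⟩ := fac_up i hi h hp
      refine ⟨h1, ?_⟩
      simp only [hss]
      exact h2
    · rintro ⟨u, v⟩ _; simp only [hss]
    · rintro ⟨u, v⟩ _; simp only [hss]
    · rintro ⟨u, v⟩ _; rfl
  · rw [Finset.filter_eq_empty_iff.mpr, Finset.sum_empty]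
    rintro ⟨u, v⟩ hp hu
    exact h (fac_down i hi hp hu).1

lemma fac_swap (w : Perm (Fin n)) (f : Perm (Fin n) → Perm (Fin n) → R n) :
    ∑ p ∈ Fac w, f p.1 p.2 = ∑ p ∈ Fac w⁻¹, f p.2 p.1 := by
  refine Finset.sum_bij' (fun p _ => (p.2, p.1)) (fun p _ => (p.2, p.1)) ?_ ?_ ?_ ?_ ?_
  · rintro ⟨u, v⟩ h
    rw [mem_fac] at h ⊢
    rw [len_inv, h.2, add_comm, h.1]; simp
  · rintro ⟨u, v⟩ h
    rw [mem_fac, len_inv] at h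
    rw [mem_fac, h.2, add_comm]
    refine ⟨?_, rfl⟩
    rw [← inv_inv w, h.1]; simp
  all_goals rintro ⟨u, v⟩ _; rfl

lemma fac_left (w : Perm (Fin n)) (i : ℕ) (hi : i + 1 < n) (f : Perm (Fin n) → Perm (Fin n) → R n) :
    ∑ p ∈ Fac w, (if len n (p.2 * simpleRefl n i) < len n p.2 then f p.1 (p.2 * simpleRefl n i) else 0)
    = if len n (simpleRefl n i * w) < len n w then ∑ p ∈ Fac (simpleRefl n i * w), f p.1 p.2 else 0 := by
  rw [fac_swap w (fun u v => if len n (v * simpleRefl n i) < len n v then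
    f u (v * simpleRefl n i) else 0), fac_right w⁻¹ i hi (fun u v => f v u), fac_swap]
  rw [len_inv_mul, len_inv, mul_inv_rev, sr_inv]

/-- substitution `x ↦ -x` -/
def ng : R n →ₐ[ℂ] R n := aeval (fun i => -(X i : R n))

lemma ng_act (w : Perm (Fin n)) (f : R n) : ng (act w f) = act w (ng f) := by
  have : (ng (n := n)).comp (act w) = (act w).comp ng := by
    ext i; simp [ng]
  exact DFunLike.congr_fun this f

lemma ng_const (f : R n) : constantCoeff (ng f) = constantCoeff f := by
  have : (constantCoeff (R := ℂ) (σ := Fin n)).comp (ng (n := n)).toRingHom = constantCoeff := by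
    ext i <;> simp [ng]
  exact DFunLike.congr_fun this f

/-- two-sided specialization of the double Schubert polynomial -/
def Bs (g u w : Perm (Fin n)) : R n :=
  ∑ p ∈ Fac w, act g (ng (schubert n p.2)) * act u (schubert n p.1)

lemma act_s (i : ℕ) (hi : i + 1 < n) (f : R n) :
    act (simpleRefl n i) f = f - rt i hi * demX n i f := by
  rw [demX_spec]; ring

lemma Bs_right (g u w : Perm (Fin n)) (i : ℕ) (hi : i + 1 < n) :
    Bs g (u * simpleRefl n i) w = Bs g u w - act u (rt i hi) *
      (if len n (w * simpleRefl n i) < len n w then Bs g u (w * simpleRefl n i) else 0) := by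
  unfold Bs
  rw [← fac_right w i hi (fun u' v => act g (ng (schubert n v)) * act u (schubert n u')),
    Finset.mul_sum, ← Finset.sum_sub_distrib]
  refine Finset.sum_congr rfl fun p _ => ?_
  rw [act_mul, act_s i hi, demX_schubert _ i hi, map_sub, map_mul]
  split_ifs
  · ring
  · simp

lemma Bs_left (g u w : Perm (Fin n)) (i : ℕ) (hi : i + 1 < n) :
    Bs (g * simpleRefl n i) u w = Bs g u w + act g (rt i hi) *
      (if len n (simpleRefl n i * w) < len n w then Bs g u (simpleRefl n i * w) else 0) := by
  have hn : ng (rt i hi : R n) = - rt i hi := by simp [ng, rt]; ring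
  unfold Bs
  rw [← fac_left w i hi (fun u' v => act g (ng (schubert n v)) * act u (schubert n u')),
    Finset.mul_sum, ← Finset.sum_add_distrib]
  refine Finset.sum_congr rfl fun p _ => ?_
  rw [act_mul, ← ng_act, act_s i hi, demX_schubert _ i hi, map_sub, map_mul, hn, map_sub, map_mul,
    map_neg]
  split_ifs
  · ring
  · simp

lemma Bs_act (h g u w : Perm (Fin n)) : act h (Bs g u w) = Bs (h * g) (h * u) w := by
  unfold Bs
  rw [map_sum]
  simp only [map_mul, act_mul]

lemma fac_one (u v : Perm (Fin n)) : (u, v) ∈ Fac 1 ↔ u = 1 ∧ v = 1 := by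
  rw [mem_fac, len_one]
  constructor
  · rintro ⟨_, h⟩
    exact ⟨len_eq_zero (by omega), len_eq_zero (by omega)⟩
  · rintro ⟨rfl, rfl⟩; simp [len_one]

lemma Bs_one (g u : Perm (Fin n)) : Bs g u 1 = 1 := by
  have : Fac (1 : Perm (Fin n)) = {(1, 1)} := by
    ext ⟨u, v⟩; rw [fac_one]; simp
  rw [Bs, this, Finset.sum_singleton, schubert_one]; simp

lemma symm_of_sr (f : R n) (h : ∀ i, i + 1 < n → act (simpleRefl n i) f = f) (w : Perm (Fin n)) :
    act w f = f := by
  induction w using perm_induction with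
  | h1 => exact act_one f
  | hs w i hi _ ih => rw [act_mul, h i hi, ih]

lemma degz (k : Fin n) (f : R n) : degreeOf k f = 0 ↔ k ∉ f.vars := by
  rw [mem_vars_iff_degreeOf_ne_zero, not_not]

lemma degreeOf_ng (k : Fin n) (f : R n) (h : degreeOf k f = 0) : degreeOf k (ng f) = 0 := by
  have hk : k ∉ f.vars := by rwa [← degz]
  rw [degz]
  intro hc
  apply hk
  have := vars_bind₁ (fun i => -(X i : R n)) f
  have h2 := this hc
  rw [Finset.mem_biUnion] at h2
  obtain ⟨i, hi, h3⟩ := h2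
  rw [vars_neg, vars_X, Finset.mem_singleton] at h3
  rwa [h3]

lemma Bs_e (w : Perm (Fin n)) (hw : w ≠ 1) : Bs 1 1 w = 0 := by
  induction hk : len n w using Nat.strong_induction_on generalizing w with
  | _ k ih =>
    have hsym : ∀ i, i + 1 < n → act (simpleRefl n i) (Bs 1 1 w) = Bs 1 1 w := by
      intro i hi
      have hss : ∀ u : Perm (Fin n), u * simpleRefl n i * simpleRefl n i = u := fun u => by
        rw [mul_assoc, sr_sq, mul_one]
      rw [Bs_act, mul_one]
      have e1 := Bs_right (simpleRefl n i) 1 w i hi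
      have e2 := Bs_left 1 1 w i hi
      have e3 := Bs_left 1 1 (w * simpleRefl n i) i hi
      rw [one_mul] at e1 e2 e3
      rw [e1, e2, e3]
      by_cases hws : w = simpleRefl n i
      · rw [hws, sr_sq, mul_one, len_one]
        simp
      · have h1 : w * simpleRefl n i ≠ 1 := fun h => hws (by
          rw [← hss w, h, one_mul])
        have h2 : simpleRefl n i * w ≠ 1 := fun h => hws (by
          rw [← one_mul w, ← sr_sq (n := n) i, mul_assoc, h, mul_one])
        have h3 : simpleRefl n i * (w * simpleRefl n i) ≠ 1 := fun h => hw (by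
          have : w = simpleRefl n i * (simpleRefl n i * (w * simpleRefl n i)) * simpleRefl n i := by
            rw [← mul_assoc (simpleRefl n i) (simpleRefl n i), sr_sq, one_mul, hss]
          rw [this, h, mul_one, sr_sq])
        have z1 : len n (w * simpleRefl n i) < len n w → Bs 1 1 (w * simpleRefl n i) = 0 :=
          fun h => ih _ (hk ▸ h) _ h1 rfl
        have z2 : len n (simpleRefl n i * w) < len n w → Bs 1 1 (simpleRefl n i * w) = 0 :=
          fun h => ih _ (hk ▸ h) _ h2 rfl
        have z3 : len n (w * simpleRefl n i) < len n w →
            len n (simpleRefl n i * (w * simpleRefl n i)) < len n (w * simpleRefl n i) →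
            Bs 1 1 (simpleRefl n i * (w * simpleRefl n i)) = 0 :=
          fun h h' => ih _ (hk ▸ (h'.trans h)) _ h3 rfl
        have y1 : (if len n (simpleRefl n i * w) < len n w then Bs 1 1 (simpleRefl n i * w)
            else (0 : R n)) = 0 := ite_eq_right_iff.mpr z2
        rw [y1]
        split_ifs with c1 c2
        · rw [z1 c1, z3 c1 c2]; ring
        · rw [z1 c1]; ring
        · ring
    have hs := symm_of_sr _ hsym
    have hdeg : ∀ k : Fin n, degreeOf k (Bs 1 1 w) = 0 := by
      intro k
      have hn : 0 < n := k.pos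
      have hlast : degreeOf (⟨n - 1, by omega⟩ : Fin n) (Bs 1 1 w) = 0 := by
        rw [← Nat.le_zero]
        refine (degreeOf_sum_le _ _ _).trans (Finset.sup_le fun p _ => ?_)
        rw [act_one, act_one]
        have hz : ∀ v : Perm (Fin n), degreeOf (⟨n - 1, by omega⟩ : Fin n) (schubert n v) = 0 := by
          intro v
          have := schubert_bd v ⟨n - 1, by omega⟩
          simpa using this
        refine (degreeOf_mul_le _ _ _).trans ?_
        rw [hz, degreeOf_ng _ _ (hz _)]
      have h1 := degreeOf_act (swap k ⟨n - 1, by omega⟩) k (Bs 1 1 w)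
      rw [hs, swap_apply_left, hlast] at h1
      exact h1.symm
    have hvars : (Bs 1 1 w).vars = ∅ := by
      ext k
      have := hdeg k
      rw [degz] at this
      simp [this]
    rw [vars_eq_empty_iff_eq_C] at hvars
    have hc : constantCoeff (Bs 1 1 w) = 0 := by
      unfold Bs
      rw [map_sum]
      refine Finset.sum_eq_zero ?_
      rintro ⟨u, v⟩ hp
      rw [mem_fac] at hp
      rw [act_one, act_one, map_mul, ng_const]
      have := len_ne_zero hw
      by_cases hu : len n u = 0
      · have : len n v ≠ 0 := by omega
        rw [(schubert_hom v).const this, zero_mul]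
      · rw [(schubert_hom u).const hu, mul_zero]
    rw [hvars]
    rw [constantCoeff_eq] at hc
    rw [hc, C_0]

lemma Bs_tri (u : Perm (Fin n)) : (∀ w, len n u ≤ len n w → u ≠ w → Bs 1 u w = 0) ∧ Bs 1 u u ≠ 0 := by
  induction u using perm_induction with
  | h1 =>
    refine ⟨fun w _ h => Bs_e w h.symm, ?_⟩
    rw [Bs_one]; exact one_ne_zero
  | hs u i hi h ih =>
    have hss : ∀ u : Perm (Fin n), u * simpleRefl n i * simpleRefl n i = u := fun u => by
      rw [mul_assoc, sr_sq, mul_one]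
    refine ⟨?_, ?_⟩
    · intro w hw hne
      rw [Bs_right 1 u w i hi, ih.1 w (by omega) (by rintro rfl; omega)]
      split_ifs with hlt
      · have := len_mul_cases w i hi
        rw [ih.1 (w * simpleRefl n i) (by omega)]
        · simp
        · intro h2; apply hne; rw [h2, hss]
      · simp
    · rw [Bs_right 1 u _ i hi, ih.1 _ (by omega) (by intro h2; rw [← h2] at h; omega), hss,
        if_pos (by omega), zero_sub, neg_ne_zero]
      refine mul_ne_zero ?_ ih.2
      rw [act_rt']
      exact X_sub_ne (ne_ab u i hi)

lemma Sw_eq (w : Perm (Fin n)) :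
    Sw n w = ∑ p ∈ Fac w, (ng (schubert n p.2)) ⊗ₜ[Ssub n] schubert n p.1 := by
  classical
  have hmem : (w, (1 : Perm (Fin n))) ∈ Fac w := by rw [mem_fac]; simp [len_one]
  rw [Sw, ← Finset.add_sum_erase _ _ hmem]
  congr 1
  · simp only [schubert_one, map_one]
  · refine Finset.sum_congr ?_ fun p _ => rfl
    ext ⟨u, v⟩
    rw [Finset.mem_erase, mem_fac, Finset.mem_filter]
    simp only [Finset.mem_univ, true_and]
    constructor
    · rintro ⟨h1, h2, h3⟩
      refine ⟨?_, h1, h3⟩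
      intro h; rw [Prod.mk.injEq] at h; rw [h.1] at h2; omega
    · rintro ⟨h1, h2, h3⟩
      refine ⟨h2, ?_, h3⟩
      have : len n v ≠ 0 := fun h4 => h1 (by
        have := len_eq_zero h4
        subst this
        rw [h2]; simp)
      omega

lemma Fw_tmul (u : Perm (Fin n)) (f g : R n) : Fw n u (f ⊗ₜ[Ssub n] g) = f * act u g := by
  simp [Fw]
  rfl

lemma Fw_Sw (u w : Perm (Fin n)) : Fw n u (Sw n w) = Bs 1 u w := by
  rw [Sw_eq, map_sum, Bs]
  refine Finset.sum_congr rfl fun p _ => ?_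
  rw [Fw_tmul, act_one]

lemma Fw_smul (u : Perm (Fin n)) (r : R n) (z : T n) : Fw n u (r • z) = r * Fw n u z := by
  induction z using TensorProduct.induction_on with
  | zero => simp
  | add x y hx hy => rw [smul_add, map_add, hx, hy, map_add, mul_add]
  | tmul f g => rw [TensorProduct.smul_tmul', Fw_tmul, Fw_tmul, smul_eq_mul, mul_assoc]

lemma main_inj (j : ℕ) (z : T n)
    (hz : z ∈ Submodule.span (R n) {z : T n | ∃ w, len n w < j ∧ z = Sw n w})
    (h0 : ∀ w, len n w < j → Fw n w z = 0) : z = 0 := by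
  classical
  have hset : {z : T n | ∃ w, len n w < j ∧ z = Sw n w} =
      Set.range (fun w : {w : Perm (Fin n) // len n w < j} => Sw n w.1) := by
    ext z
    simp only [Set.mem_ofPred_eq, Set.mem_range, Subtype.exists]
    constructor
    · rintro ⟨w, h, rfl⟩; exact ⟨w, h, rfl⟩
    · rintro ⟨w, h, rfl⟩; exact ⟨w, h, rfl⟩
  rw [hset, Submodule.mem_span_range_iff_exists_fun] at hz
  obtain ⟨c, rfl⟩ := hz
  have hF : ∀ u : Perm (Fin n), len n u < j →
      ∑ w : {w : Perm (Fin n) // len n w < j}, c w * Bs 1 u w.1 = 0 := by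
    intro u hu
    have := h0 u hu
    rw [map_sum] at this
    simpa only [Fw_smul, Fw_Sw] using this
  have hc : ∀ k, ∀ w : {w : Perm (Fin n) // len n w < j}, len n w.1 = k → c w = 0 := by
    intro k
    induction k using Nat.strong_induction_on with
    | _ k ih =>
      intro w hw
      have h1 := hF w.1 w.2
      rw [Finset.sum_eq_single w] at h1
      · exact (mul_eq_zero.mp h1).resolve_right (Bs_tri w.1).2
      · intro v _ hv
        by_cases hlt : len n v.1 < k
        · rw [ih _ hlt v rfl, zero_mul]
        · rw [(Bs_tri w.1).1 v.1 (by omega) (fun h => hv (Subtype.ext h.symm)), mul_zero]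
      · simp
  refine Finset.sum_eq_zero fun w _ => ?_
  rw [hc _ w rfl, zero_smul]

end S5
/-- For `0 ≤ j ≤ n(n-1)/2 + 1`, the left `R`-module homomorphism
`⊕_{ℓ(w) < j} F_w` is injective on `Γ_{<j}`, the left `R`-submodule of `R ⊗_{R^{S_n}} R`
spanned by `{S_w : ℓ(w) < j}`. -/
theorem statement5 (n j : ℕ) (hj : j ≤ n.choose 2 + 1) :
    Set.InjOn
      (fun z : T n => fun w : {w : Equiv.Perm (Fin n) // len n w < j} => Fw n w.1 z)
      (Submodule.span (R n) {z : T n | ∃ w, len n w < j ∧ z = Sw n w} : Set (T n)) := by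

  intro x hx y hy hxy
  rw [← sub_eq_zero]
  refine S5.main_inj j _ (Submodule.sub_mem _ hx hy) fun w hw => ?_
  have h := congrFun hxy ⟨w, hw⟩
  rw [map_sub, sub_eq_zero]
  exact h
end
end
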